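/- Let (α,β,γ,δ) be an admissible and nondegenerate quadruple. Then the q-zw-measures form a coherent system: for every N ≥ 1 and every Y ∈ 𝔾_N, Σ_{X ∈ 𝔾_{N+1}} M_{N+1}(X) · Λ^{N+1}_N(X,Y) = M_N(Y). -/

import Mathlib

open scoped BigOperators
open Classical

noncomputable section

/-- The double q-lattice Λ = {ζ₋ qᵐ} ∪ {ζ₊ qⁿ}. -/
def Lambda (q zm zp : ℝ) : Set ℝ :=
  {x | ∃ m : ℤ, x = zm * q ^ m} ∪ {x | ∃ n : ℤ, x = zp * q ^ n}

/-- The interval I(a,b) of the double q-lattice. -/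
def qInterval (q zm zp a b : ℝ) : Set ℝ :=
  if b < 0 then Set.Ico a b ∩ Lambda q zm zp
  else if a < 0 then Set.Icc a b ∩ Lambda q zm zp
  else Set.Ioc a b ∩ Lambda q zm zp

/-- N-point configurations on the lattice. -/
def Conf (q zm zp : ℝ) (N : ℕ) : Type :=
  {x : Fin N → ℝ // StrictMono x ∧ ∀ i, x i ∈ Lambda q zm zp}

/-- Interlacement Y ≺ X. -/
def Interlaces (q zm zp : ℝ) {N : ℕ} (Y : Conf q zm zp N) (X : Conf q zm zp (N+1)) : Prop :=
  ∀ i : Fin N, Y.1 i ∈ qInterval q zm zp (X.1 i.castSucc) (X.1 i.succ)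

/-- Vandermonde-type product ∏_{i<j} (x_j - x_i). -/
def vprod {N : ℕ} (x : Fin N → ℝ) : ℝ :=
  ∏ p ∈ Finset.univ.filter (fun p : Fin N × Fin N => p.1 < p.2), (x p.2 - x p.1)

/-- finite q-Pochhammer symbol (a;q)_n, real version. -/
def qpochR (a q : ℝ) (n : ℕ) : ℝ := ∏ m ∈ Finset.range n, (1 - a * q ^ m)

/-- The q-link Λ^{N+1}_N. -/
def qlink (q zm zp : ℝ) (N : ℕ) (X : Conf q zm zp (N+1)) (Y : Conf q zm zp N) : ℝ :=
  if Interlaces q zm zp Y X then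
    (∏ i, |Y.1 i|) * qpochR q q N * vprod Y.1 / vprod X.1
  else 0


/-- finite q-Pochhammer symbol (a;q)_n in ℂ. -/
def qpochC (a : ℂ) (q : ℝ) (n : ℕ) : ℂ := ∏ m ∈ Finset.range n, (1 - a * (q : ℂ) ^ m)

/-- infinite q-Pochhammer symbol (a;q)_∞ in ℂ. -/
def qpochInf (a : ℂ) (q : ℝ) : ℂ := ∏' m : ℕ, (1 - a * (q : ℂ) ^ m)

/-- theta function θ_q(u) = (u;q)_∞ (q/u;q)_∞. -/
def thetaQ (q : ℝ) (u : ℂ) : ℂ := qpochInf u q * qpochInf ((q : ℂ) / u) q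

/-- admissible pair of parameters. -/
def AdmissiblePair (q zm zp : ℝ) (a b : ℂ) : Prop :=
  a ≠ 0 ∧ b ≠ 0 ∧
    ((a.im ≠ 0 ∧ b = (starRingEnd ℂ) a) ∨
     (a.im = 0 ∧ b.im = 0 ∧
       ∃ s t : ℝ, s ∈ Lambda q zm zp ∧ t ∈ Lambda q zm zp ∧ s < t ∧
         (∀ u ∈ Lambda q zm zp, ¬ (s < u ∧ u < t)) ∧
         a⁻¹.re ∈ Set.Ioo s t ∧ b⁻¹.re ∈ Set.Ioo s t))

/-- admissible nondegenerate quadruple: (α,β), (γ,δ) admissible pairs and γδq > αβ. -/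
def AdmissibleNondeg (q zm zp : ℝ) (al be ga de : ℂ) : Prop :=
  AdmissiblePair q zm zp al be ∧ AdmissiblePair q zm zp ga de ∧
    (al * be).re < (ga * de).re * q

/-- the weight w(x; a,b,c,d) = |x| (ax;q)_∞(bx;q)_∞ / ((cx;q)_∞(dx;q)_∞). -/
def weightC (q : ℝ) (a b c d : ℂ) (x : ℝ) : ℂ :=
  (|x| : ℝ) * (qpochInf (a * x) q * qpochInf (b * x) q) /
    (qpochInf (c * x) q * qpochInf (d * x) q)

/-- pseudo big q-Jacobi polynomial P_n(x; a,b,c,d). -/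
def pbqJ (q : ℝ) (a b c d : ℂ) (n : ℕ) (x : ℂ) : ℂ :=
  ∑ k ∈ Finset.range (n + 1),
    qpochC ((q : ℂ) ^ (-(n : ℤ))) q k * qpochC (c * d * (q : ℂ) ^ ((n : ℤ) + 1) / (a * b)) q k *
        qpochC (c * x) q k /
      (qpochC (c * (q : ℂ) / b) q k * qpochC (c * (q : ℂ) / a) q k * qpochC (q : ℂ) q k) *
      (q : ℂ) ^ k

/-- leading coefficient k_n(a,b,c,d) of P_n. -/
def kCoeff (q : ℝ) (a b c d : ℂ) (n : ℕ) : ℂ :=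
  c ^ n * qpochC (c * d * (q : ℂ) ^ ((n : ℤ) + 1) / (a * b)) q n /
    (qpochC (c * (q : ℂ) / b) q n * qpochC (c * (q : ℂ) / a) q n)

/-- the q-hypergeometric series ₂φ₁(A,B;C;q,Z). -/
def phi21 (q : ℝ) (A B C Z : ℂ) : ℂ :=
  ∑' m : ℕ, qpochC A q m * qpochC B q m / (qpochC C q m * qpochC (q : ℂ) q m) * Z ^ m

/-- principal branch square root. -/
def csqrt (z : ℂ) : ℂ := z ^ (1 / 2 : ℂ)


/-- the weight w_N of the q-zw-measure, with parameters (α,β,γq^{1−N},δq^{1−N}). -/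
def wN (q : ℝ) (al be ga de : ℂ) (N : ℕ) (x : ℝ) : ℂ :=
  weightC q al be (ga * (q : ℂ) ^ (1 - (N : ℤ))) (de * (q : ℂ) ^ (1 - (N : ℤ))) x

/-- unnormalized q-zw-weight of a configuration: ∏ w_N(xᵢ) ∏_{i<j}(x_j−x_i)². -/
def zwUnnorm (q zm zp : ℝ) (al be ga de : ℂ) (N : ℕ) (X : Conf q zm zp N) : ℝ :=
  (∏ i, (wN q al be ga de N (X.1 i)).re) *
    ∏ p ∈ Finset.univ.filter (fun p : Fin N × Fin N => p.1 < p.2), (X.1 p.2 - X.1 p.1) ^ 2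

/-- normalizing constant Z_N. -/
def ZN (q zm zp : ℝ) (al be ga de : ℂ) (N : ℕ) : ℝ :=
  ∑' X : Conf q zm zp N, zwUnnorm q zm zp al be ga de N X

/-- the q-zw-measure M_N on 𝔾_N. -/
def zwM (q zm zp : ℝ) (al be ga de : ℂ) (N : ℕ) (X : Conf q zm zp N) : ℝ :=
  zwUnnorm q zm zp al be ga de N X / ZN q zm zp al be ga de N


/-!
Write `w_N(x) = |x| φ_N(x)`. The ratios `φ_N` satisfy a q-Pearson equation: `x φ_{N+1}(x) m_k(x)`,
with `m_k` a polynomial of degree `k + 1`, is the q-difference of `φ_N(x) x ^ k`. Hence the sum of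
`w_{N+1} m_k` over the part of `Λ` to the left of `y` telescopes to `φ_N(y) y ^ k`, and the sum over
all of `Λ` vanishes; that `γ δ q > α β` gives convergence and keeps `m_k` from dropping degree. The
Vandermonde determinant in `X` may be rewritten with the columns `1, m_0, …, m_{N-1}`, so by
multilinearity its weighted sum over the `X` interlacing with `Y` is a constant times
`∏ φ_N(y_i)` times the Vandermonde determinant in `Y`.

This gives coherency of the unnormalized measures up to a constant `C`. The links are stochastic, by
a determinant of Jackson integrals of monomials, so summing over `Y` yields `Z_{N+1} = C Z_N`; in
particular each `Z_N` is finite, by induction on `N`.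
-/

open Filter Topology Set

/-! ### Multiple series and determinants -/

theorem hasSum_indicator_range_iff {ι L : Type*} {g : ι → L} (hg : Function.Injective g)
    {f : L → ℝ} {s : ℝ} : HasSum ((range g).indicator f) s ↔ HasSum (f ∘ g) s := by
  rw [← hasSum_subtype_iff_indicator, ← hg.hasSum_range_iff]
  rfl

theorem hasSum_pi_prod {L : Type*} {n : ℕ} {f : Fin n → L → ℝ} {s : Fin n → ℝ}
    (h : ∀ i, HasSum (f i) (s i)) :
    HasSum (fun x : Fin n → L => ∏ i, f i (x i)) (∏ i, s i) := by
  induction n with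
  | zero => simp
  | succ n ih =>
    have htail : HasSum (fun x : Fin n → L => ∏ i, f i.succ (x i)) (∏ i : Fin n, s i.succ) :=
      ih fun i => h i.succ
    have hsum := summable_mul_of_summable_norm (R := ℝ) (h 0).summable.norm htail.summable.norm
    have hprod := (h 0).mul htail hsum
    rw [Fin.prod_univ_succ, ← (Fin.consEquiv fun _ => L).hasSum_iff]
    simpa [Function.comp_def, Fin.prod_univ_succ, Fin.consEquiv] using hprod

theorem hasSum_det {L : Type*} {n : ℕ} {f : Fin n → Fin n → L → ℝ} {s : Fin n → Fin n → ℝ}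
    (h : ∀ i j, HasSum (f i j) (s i j)) :
    HasSum (fun x : Fin n → L => (Matrix.of fun i j => f i j (x i)).det) (Matrix.of s).det := by
  simp_rw [← Matrix.det_transpose (Matrix.of _), Matrix.det_apply]
  refine hasSum_sum fun σ _ => ?_
  simpa using (hasSum_pi_prod fun i => h i (σ i)).const_smul (Equiv.Perm.sign σ)

theorem indicator_pi_det {L : Type*} {n : ℕ} (s : Fin n → Set L) (f : Fin n → L → ℝ)
    (x : Fin n → L) :
    (univ.pi s).indicator (fun x => (Matrix.of fun i j => f j (x i)).det) x =
      (Matrix.of fun i j => (s i).indicator (f j) (x i)).det := by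
  by_cases hx : x ∈ univ.pi s
  · simp only [indicator_of_mem hx, indicator_of_mem (hx _ (mem_univ _))]
  · obtain ⟨i, hi⟩ : ∃ i, x i ∉ s i := by simpa [Set.mem_pi] using hx
    rw [indicator_of_notMem hx, Matrix.det_eq_zero_of_row_eq_zero i]
    exact fun j => indicator_of_notMem hi _

theorem hasSum_indicator_pi_det {L : Type*} {n : ℕ} {s : Fin n → Set L} {f : Fin n → L → ℝ}
    {S : Fin n → Fin n → ℝ} (h : ∀ i j, HasSum ((s i).indicator (f j)) (S i j)) :
    HasSum ((univ.pi s).indicator fun x => (Matrix.of fun i j => f j (x i)).det)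
      (Matrix.of S).det := by
  simpa only [← indicator_pi_det] using hasSum_det h

theorem vprod_eq_det_vandermonde {N : ℕ} (x : Fin N → ℝ) :
    vprod x = (Matrix.vandermonde x).det := by
  rw [Matrix.det_vandermonde, vprod, Finset.prod_filter, Fintype.prod_prod_type]
  refine Finset.prod_congr rfl fun i _ => ?_
  rw [← Finset.prod_filter, Finset.filter_lt_eq_Ioi]

theorem vprod_pos {N : ℕ} {x : Fin N → ℝ} (h : StrictMono x) : 0 < vprod x :=
  Finset.prod_pos fun _ hp => sub_pos.2 (h (Finset.mem_filter.1 hp).2)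

theorem det_succ_sub_castSucc_pow {N : ℕ} (x : Fin (N + 1) → ℝ) :
    (Matrix.of fun i j : Fin N => x i.succ ^ (j.1 + 1) - x i.castSucc ^ (j.1 + 1)).det =
      vprod x := by
  let B : Matrix (Fin (N + 1)) (Fin (N + 1)) ℝ := Matrix.of fun i j =>
    Fin.cases (x 0 ^ j.1) (fun k => x k.succ ^ j.1 - x k.castSucc ^ j.1) i
  have hB : (Matrix.vandermonde x).det = B.det :=
    Matrix.det_eq_of_forall_row_eq_smul_add_pred (fun _ => 1) (by simp [B]) (by simp [B])
  rw [vprod_eq_det_vandermonde, hB, Matrix.det_succ_column_zero, Fin.sum_univ_succ,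
    Finset.sum_eq_zero fun i _ => by simp [B]]
  simp only [B, Matrix.of_apply, Fin.val_zero, pow_zero, Fin.cases_zero, mul_one, one_mul, add_zero,
    Fin.succAbove_zero]
  rfl

theorem det_mul_pow {N : ℕ} (w x : Fin N → ℝ) :
    (Matrix.of fun i j : Fin N => w i * x i ^ j.1).det = (∏ i, w i) * vprod x := by
  rw [vprod_eq_det_vandermonde, ← Matrix.det_mul_column]
  rfl

theorem det_mul_eval_of_natDegree_le {N : ℕ} (w x : Fin N → ℝ) (p : Fin N → Polynomial ℝ)
    (hp : ∀ j, (p j).natDegree ≤ j) :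
    (Matrix.of fun i j => w i * (p j).eval (x i)).det =
      (∏ j, (p j).coeff j) * ((∏ i, w i) * vprod x) := by
  have hdet : (Matrix.of fun i j => (p j).eval (x i)).det = (∏ j, (p j).coeff j) * vprod x := by
    rw [Matrix.eval_matrixOfPolynomials_eq_vandermonde_mul_matrixOfPolynomials x p hp,
      Matrix.det_mul, mul_comm, vprod_eq_det_vandermonde,
      Matrix.det_of_isUpperTriangular (M := Matrix.of fun i j : Fin N => (p j).coeff i)]
    · rfl
    · exact fun i j hij =>
        Polynomial.coeff_eq_zero_of_natDegree_lt ((hp j).trans_lt hij)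
  rw [mul_left_comm, ← hdet, ← Matrix.det_mul_column]
  rfl

theorem det_of_last_row_succ_eq_zero {N : ℕ} (T : Fin (N + 1) → Fin (N + 1) → ℝ)
    (h_last : ∀ j : Fin N, T (Fin.last N) j.succ = 0) :
    (Matrix.of T).det =
      (-1) ^ N * T (Fin.last N) 0 * (Matrix.of fun i j : Fin N => T i.castSucc j.succ).det := by
  rw [Matrix.det_succ_row _ (Fin.last N), Fin.sum_univ_succ,
    Finset.sum_eq_zero fun i _ => by simp [h_last]]
  simp only [Fin.val_last, Fin.val_zero, add_zero, Matrix.of_apply, Fin.succAbove_last,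
    Fin.succAbove_zero]
  rfl

-- The set of `x` is the product of the cells `E 0`, `E 1 \ E 0`, …, whose sums are successive
-- differences of rows of `U`.
theorem hasSum_indicator_staircase_det {L : Type*} {N : ℕ} {E : Fin (N + 1) → Set L}
    (hE : Monotone E) {f : Fin (N + 1) → L → ℝ} {U : Fin (N + 1) → Fin (N + 1) → ℝ}
    (hU : ∀ i j, HasSum ((E i).indicator (f j)) (U i j)) :
    HasSum ({x : Fin (N + 1) → L |
        (∀ i, x i ∈ E i) ∧ ∀ k : Fin N, x k.succ ∉ E k.castSucc}.indicator
        fun x => (Matrix.of fun i j => f j (x i)).det) (Matrix.of U).det := by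
  let cell : Fin (N + 1) → Set L := Fin.cases (E 0) fun k => E k.succ \ E k.castSucc
  have pi_cell : univ.pi cell =
      {x | (∀ i, x i ∈ E i) ∧ ∀ k : Fin N, x k.succ ∉ E k.castSucc} := by
    ext x
    simp only [mem_univ_pi, Fin.forall_fin_succ (P := fun i => x i ∈ cell i), mem_ofPred_eq,
      Fin.forall_fin_succ (P := fun i => x i ∈ E i), cell, Fin.cases_zero, Fin.cases_succ,
      Set.mem_sdiff, forall_and, and_assoc]
  let V (i j : Fin (N + 1)) : ℝ := i.cases (U 0 j) fun k => U k.succ j - U k.castSucc j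
  have hV (i j : Fin (N + 1)) : HasSum ((cell i).indicator (f j)) (V i j) := by
    cases i using Fin.cases with
    | zero => exact hU 0 j
    | succ k =>
      simp only [cell, V, Fin.cases_succ, indicator_sdiff' (hE k.castSucc_le_succ)]
      exact (hU _ j).sub (hU _ j)
  have hdet : (Matrix.of U).det = (Matrix.of V).det :=
    Matrix.det_eq_of_forall_row_eq_smul_add_pred (fun _ => 1) (by simp [V]) (by simp [V])
  rw [← pi_cell, hdet]
  exact hasSum_indicator_pi_det hV

theorem monotone_lastCases_univ {L : Type*} {N : ℕ} {D : Fin N → Set L} (hD : Monotone D) :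
    Monotone (Fin.lastCases univ D : Fin (N + 1) → Set L) := by
  refine fun i j hij => ?_
  cases j using Fin.lastCases with
  | last => simp
  | cast j =>
    cases i using Fin.lastCases with
    | last => exact absurd hij (not_le_of_gt j.castSucc_lt_last)
    | cast i => simpa using hD (Fin.castSucc_le_castSucc_iff.1 hij)

theorem hasSum_indicator_chain_det {L : Type*} {N : ℕ} {D : Fin N → Set L} (hD : Monotone D)
    {f : Fin (N + 1) → L → ℝ} {total : ℝ} {T : Fin N → Fin N → ℝ}
    (h_zero : HasSum (f 0) total) (h_succ : ∀ j : Fin N, HasSum (f j.succ) 0)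
    (hT : ∀ i j : Fin N, HasSum ((D i).indicator (f j.succ)) (T i j)) :
    HasSum ({x : Fin (N + 1) → L | ∀ k : Fin N, x k.castSucc ∈ D k ∧ x k.succ ∉ D k}.indicator
        fun x => (Matrix.of fun i j => f j (x i)).det)
      ((-1) ^ N * total * (Matrix.of T).det) := by
  let E : Fin (N + 1) → Set L := Fin.lastCases univ D
  have E_last : E (Fin.last N) = univ := Fin.lastCases_last
  have E_castSucc (k : Fin N) : E k.castSucc = D k := Fin.lastCases_castSucc k
  let U (i j : Fin (N + 1)) : ℝ := ∑' a, (E i).indicator (f j) a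
  have hU (i j : Fin (N + 1)) : HasSum ((E i).indicator (f j)) (U i j) := by
    refine (Summable.indicator ?_ _).hasSum
    exact j.cases h_zero.summable fun j => (h_succ j).summable
  have U_last_zero : U (Fin.last N) 0 = total := by simp [U, E_last, h_zero.tsum_eq]
  have U_last_succ (j : Fin N) : U (Fin.last N) j.succ = 0 := by
    simp [U, E_last, (h_succ j).tsum_eq]
  have U_castSucc (i j : Fin N) : U i.castSucc j.succ = T i j := by
    simp only [U, E_castSucc, (hT i j).tsum_eq]
  have h := hasSum_indicator_staircase_det (monotone_lastCases_univ hD) hU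
  rw [det_of_last_row_succ_eq_zero U U_last_succ, U_last_zero, funext₂ U_castSucc] at h
  simpa [Fin.forall_fin_succ', forall_and] using h

/-! ### The double q-lattice -/

section Lattice

variable {q zm zp : ℝ}

theorem ne_zero_of_mem_Lambda (hq0 : 0 < q) (hzm : zm < 0) (hzp : 0 < zp) {x : ℝ}
    (hx : x ∈ Lambda q zm zp) : x ≠ 0 := by
  rcases hx with ⟨m, rfl⟩ | ⟨m, rfl⟩
  · exact mul_ne_zero hzm.ne (zpow_ne_zero _ hq0.ne')
  · exact mul_ne_zero hzp.ne' (zpow_ne_zero _ hq0.ne')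

theorem mul_zpow_mem_Lambda (hq0 : 0 < q) {x : ℝ} (hx : x ∈ Lambda q zm zp) (k : ℤ) :
    x * q ^ k ∈ Lambda q zm zp := by
  rcases hx with ⟨m, rfl⟩ | ⟨m, rfl⟩
  · exact .inl ⟨m + k, by rw [zpow_add₀ hq0.ne', mul_assoc]⟩
  · exact .inr ⟨m + k, by rw [zpow_add₀ hq0.ne', mul_assoc]⟩

theorem mul_pow_mem_Lambda (hq0 : 0 < q) {x : ℝ} (hx : x ∈ Lambda q zm zp) (n : ℕ) :
    x * q ^ n ∈ Lambda q zm zp := by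
  simpa using mul_zpow_mem_Lambda hq0 hx n

theorem div_pow_mem_Lambda (hq0 : 0 < q) {x : ℝ} (hx : x ∈ Lambda q zm zp) (n : ℕ) :
    x / q ^ n ∈ Lambda q zm zp := by
  simpa [div_eq_mul_inv] using mul_zpow_mem_Lambda hq0 hx (-n)

theorem injective_mul_pow (hq0 : 0 < q) (hq1 : q < 1) {x : ℝ} (hx : x ≠ 0) :
    Function.Injective fun n : ℕ => x * q ^ n :=
  (mul_right_injective₀ hx).comp (pow_right_injective₀ hq0 hq1.ne)

theorem injective_div_pow (hq0 : 0 < q) (hq1 : q < 1) {x : ℝ} (hx : x ≠ 0) :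
    Function.Injective fun n : ℕ => x / q ^ n := by
  simp_rw [div_eq_mul_inv]
  exact (mul_right_injective₀ hx).comp (inv_injective.comp (pow_right_injective₀ hq0 hq1.ne))

theorem exists_zpow_of_mem_Lambda (hq0 : 0 < q) (hzm : zm < 0) (hzp : 0 < zp) {x y : ℝ}
    (hx : x ∈ Lambda q zm zp) (hy : y ∈ Lambda q zm zp) (h : 0 < x * y) :
    ∃ k : ℤ, y = x * q ^ k := by
  have hq (m : ℤ) : 0 < q ^ m := zpow_pos hq0 m
  have ratio (z : ℝ) (m n : ℤ) : z * q ^ n = z * q ^ m * q ^ (n - m) := by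
    rw [mul_assoc, ← zpow_add₀ hq0.ne', add_sub_cancel]
  rcases hx with ⟨m, rfl⟩ | ⟨m, rfl⟩ <;> rcases hy with ⟨n, rfl⟩ | ⟨n, rfl⟩
  · exact ⟨n - m, ratio zm m n⟩
  · exact absurd h (mul_neg_of_neg_of_pos (mul_neg_of_neg_of_pos hzm (hq m))
      (mul_pos hzp (hq n))).not_gt
  · exact absurd h (mul_neg_of_pos_of_neg (mul_pos hzp (hq m))
      (mul_neg_of_neg_of_pos hzm (hq n))).not_gt
  · exact ⟨n - m, ratio zp m n⟩

theorem range_mul_pow_eq (hq0 : 0 < q) (hq1 : q < 1) (hzm : zm < 0) (hzp : 0 < zp) {x : ℝ}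
    (hx : x ∈ Lambda q zm zp) :
    (range fun n : ℕ => x * q ^ n) = Lambda q zm zp ∩ (Ioc 0 x ∪ Ico x 0) := by
  have hx0 := ne_zero_of_mem_Lambda hq0 hzm hzp hx
  ext z
  constructor
  · rintro ⟨n, rfl⟩
    have hpos : 0 < q ^ n := pow_pos hq0 n
    have hle : q ^ n ≤ 1 := pow_le_one₀ hq0.le hq1.le
    refine ⟨mul_pow_mem_Lambda hq0 hx n, ?_⟩
    rcases hx0.lt_or_gt with hneg | hpos'
    · exact .inr ⟨by nlinarith, mul_neg_of_neg_of_pos hneg hpos⟩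
    · exact .inl ⟨mul_pos hpos' hpos, by nlinarith⟩
  · rintro ⟨hz, hzx⟩
    have hsign : 0 < x * z := by
      rcases hzx with ⟨h, h'⟩ | ⟨h, h'⟩ <;> nlinarith
    obtain ⟨k, rfl⟩ := exists_zpow_of_mem_Lambda hq0 hzm hzp hx hz hsign
    have hk : 0 ≤ k := by
      by_contra! hk
      have : 1 < q ^ k := one_lt_zpow_of_neg₀ hq0 hq1 hk
      rcases hzx with ⟨h, h'⟩ | ⟨h, h'⟩ <;> nlinarith
    lift k to ℕ using hk
    exact ⟨k, by simp⟩

theorem mem_range_div_pow_iff (hq0 : 0 < q) (hq1 : q < 1) (hzm : zm < 0) (hzp : 0 < zp) {y z : ℝ}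
    (hy : y ∈ Lambda q zm zp) :
    z ∈ (range fun n : ℕ => y / q ^ n) ↔ z ∈ Lambda q zm zp ∧ y ∈ Ioc 0 z ∪ Ico z 0 := by
  have hswap : z ∈ (range fun n : ℕ => y / q ^ n) ↔ y ∈ range fun n : ℕ => z * q ^ n := by
    simp only [mem_range, div_eq_iff (pow_ne_zero _ hq0.ne'), eq_comm]
  constructor
  · intro h
    have hz : z ∈ Lambda q zm zp := by
      obtain ⟨n, rfl⟩ := h
      exact div_pow_mem_Lambda hq0 hy n
    rw [hswap, range_mul_pow_eq hq0 hq1 hzm hzp hz] at h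
    exact ⟨hz, h.2⟩
  · rintro ⟨hz, hyz⟩
    rw [hswap, range_mul_pow_eq hq0 hq1 hzm hzp hz]
    exact ⟨hy, hyz⟩

theorem range_div_pow_eq_of_neg (hq0 : 0 < q) (hq1 : q < 1) (hzm : zm < 0) (hzp : 0 < zp) {y : ℝ}
    (hy : y ∈ Lambda q zm zp) (hneg : y < 0) :
    (range fun n : ℕ => y / q ^ n) = Lambda q zm zp ∩ Iic y := by
  ext z
  simp [mem_range_div_pow_iff hq0 hq1 hzm hzp hy, hneg, hneg.not_gt, -mem_range]

theorem range_div_pow_eq_of_pos (hq0 : 0 < q) (hq1 : q < 1) (hzm : zm < 0) (hzp : 0 < zp) {y : ℝ}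
    (hy : y ∈ Lambda q zm zp) (hpos : 0 < y) :
    (range fun n : ℕ => y / q ^ n) = Lambda q zm zp ∩ Ici y := by
  ext z
  simp [mem_range_div_pow_iff hq0 hq1 hzm hzp hy, hpos, hpos.not_gt, -mem_range]

/-- The half-line of points preceding `y` in interlacing configurations: with this set,
`y ∈ I(a, b)` means that `a` precedes `y` and `b` does not. The end point `y` belongs to it when
`y < 0` only. -/
def leftCut (y : ℝ) : Set ℝ := if y < 0 then Iic y else Iio y

theorem leftCut_of_neg {y : ℝ} (hy : y < 0) : leftCut y = Iic y := if_pos hy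

theorem leftCut_of_pos {y : ℝ} (hy : 0 < y) : leftCut y = Iio y := if_neg hy.not_gt

theorem monotone_leftCut : Monotone leftCut := by
  intro y z hyz x
  unfold leftCut
  split_ifs <;> simp only [mem_Iic, mem_Iio] <;> intro hx <;> linarith

theorem lt_of_mem_leftCut_of_notMem {y a b : ℝ} (ha : a ∈ leftCut y) (hb : b ∉ leftCut y) :
    a < b := by
  unfold leftCut at ha hb
  split_ifs at ha hb <;> simp only [mem_Iic, mem_Iio] at ha hb <;> linarith

theorem mem_qInterval_iff {a b y : ℝ} :
    y ∈ qInterval q zm zp a b ↔ y ∈ Lambda q zm zp ∧ a ∈ leftCut y ∧ b ∉ leftCut y := by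
  unfold qInterval leftCut
  split_ifs <;> simp only [mem_inter_iff, mem_Ico, mem_Icc, mem_Ioc, mem_Iic, mem_Iio] <;> grind

theorem lt_of_mem_qInterval {a b c d y z : ℝ} (hbc : b ≤ c) (hy : y ∈ qInterval q zm zp a b)
    (hz : z ∈ qInterval q zm zp c d) : y < z := by
  by_contra! hzy
  have hc : c ∈ leftCut y := monotone_leftCut hzy (mem_qInterval_iff.1 hz).2.1
  exact hbc.not_gt (lt_of_mem_leftCut_of_notMem hc (mem_qInterval_iff.1 hy).2.2)

theorem interlaces_iff {N : ℕ} {Y : Conf q zm zp N} {X : Conf q zm zp (N + 1)} :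
    Interlaces q zm zp Y X ↔
      ∀ k : Fin N, X.1 k.castSucc ∈ leftCut (Y.1 k) ∧ X.1 k.succ ∉ leftCut (Y.1 k) :=
  forall_congr' fun k => mem_qInterval_iff.trans (and_iff_right (Y.2.2 k))

theorem hasSum_Conf_iff {N : ℕ} {f : (Fin N → ℝ) → ℝ} {s : ℝ}
    (hf : ∀ x, f x ≠ 0 → StrictMono x ∧ ∀ i, x i ∈ Lambda q zm zp) :
    HasSum (fun X : Conf q zm zp N => f X.1) s ↔ HasSum f s :=
  hasSum_subtype_iff_of_support_subset (s := {x | StrictMono x ∧ ∀ i, x i ∈ Lambda q zm zp}) hf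

end Lattice

/-! ### The links are stochastic -/

section Link

variable {q zm zp : ℝ}

theorem qpochR_self_pos (hq0 : 0 ≤ q) (hq1 : q < 1) (n : ℕ) : 0 < qpochR q q n :=
  Finset.prod_pos fun m _ => sub_pos.2 <| by
    simpa only [pow_succ'] using pow_lt_one₀ hq0 hq1 m.succ_ne_zero

theorem qpochR_self_eq_prod (n : ℕ) : qpochR q q n = ∏ j : Fin n, (1 - q ^ (j.1 + 1)) := by
  simp_rw [qpochR, Finset.prod_range, pow_succ']

theorem hasSum_indicator_range_mul_pow (hq0 : 0 < q) (hq1 : q < 1) {x : ℝ} (hx : x ≠ 0) (j : ℕ) :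
    HasSum ((range fun n : ℕ => x * q ^ n).indicator fun y => y ^ (j + 1))
      (x ^ (j + 1) / (1 - q ^ (j + 1))) := by
  rw [hasSum_indicator_range_iff (injective_mul_pow hq0 hq1 hx), div_eq_mul_inv]
  have hgeom := hasSum_geometric_of_lt_one (pow_nonneg hq0.le _)
    (pow_lt_one₀ hq0.le hq1 j.succ_ne_zero)
  exact (hgeom.mul_left (x ^ (j + 1))).congr_fun fun n => by
    rw [Function.comp_apply, mul_pow, pow_right_comm]

-- The Jackson integral of `y ^ j` from `a` to `b`: on each side of `0` one subtracts the
-- geometric progressions descending from `a` and from `b`.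
theorem hasSum_indicator_qInterval (hq0 : 0 < q) (hq1 : q < 1) (hzm : zm < 0) (hzp : 0 < zp)
    {a b : ℝ} (ha : a ∈ Lambda q zm zp) (hb : b ∈ Lambda q zm zp) (hab : a < b) (j : ℕ) :
    HasSum ((qInterval q zm zp a b).indicator fun y => |y| * y ^ j)
      ((b ^ (j + 1) - a ^ (j + 1)) / (1 - q ^ (j + 1))) := by
  have ha0 := ne_zero_of_mem_Lambda hq0 hzm hzp ha
  have hb0 := ne_zero_of_mem_Lambda hq0 hzm hzp hb
  have hsegments : (qInterval q zm zp a b).indicator (fun y => |y| * y ^ j) = fun y =>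
      (range fun n : ℕ => b * q ^ n).indicator (fun y => y ^ (j + 1)) y -
        (range fun n : ℕ => a * q ^ n).indicator (fun y => y ^ (j + 1)) y := by
    funext y
    rw [range_mul_pow_eq hq0 hq1 hzm hzp ha, range_mul_pow_eq hq0 hq1 hzm hzp hb]
    by_cases hy : y ∈ Lambda q zm zp
    · simp only [indicator, mem_qInterval_iff, hy, true_and, mem_inter_iff, mem_union, mem_Ioc,
        mem_Ico, pow_succ']
      rcases (ne_zero_of_mem_Lambda hq0 hzm hzp hy).lt_or_gt with hneg | hpos
      · simp only [leftCut_of_neg hneg, abs_of_neg hneg, mem_Iic]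
        split_ifs <;> grind
      · simp only [leftCut_of_pos hpos, abs_of_pos hpos, mem_Iio]
        split_ifs <;> grind
    · simp [indicator, mem_qInterval_iff, hy]
  rw [hsegments, sub_div]
  exact (hasSum_indicator_range_mul_pow hq0 hq1 hb0 j).sub
    (hasSum_indicator_range_mul_pow hq0 hq1 ha0 j)

theorem qlink_nonneg (hq0 : 0 ≤ q) (hq1 : q < 1) {N : ℕ} (X : Conf q zm zp (N + 1))
    (Y : Conf q zm zp N) : 0 ≤ qlink q zm zp N X Y := by
  unfold qlink
  split_ifs
  · have := qpochR_self_pos hq0 hq1 N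
    have := vprod_pos X.2.1
    have := vprod_pos Y.2.1
    positivity
  · exact le_rfl

theorem hasSum_prod_abs_mul_vprod (hq0 : 0 < q) (hq1 : q < 1) (hzm : zm < 0) (hzp : 0 < zp)
    {N : ℕ} (X : Conf q zm zp (N + 1)) :
    HasSum ((univ.pi fun i : Fin N => qInterval q zm zp (X.1 i.castSucc) (X.1 i.succ)).indicator
      fun y => (∏ i, |y i|) * vprod y) (vprod X.1 / qpochR q q N) := by
  have h := hasSum_indicator_pi_det fun i j : Fin N =>
    hasSum_indicator_qInterval hq0 hq1 hzm hzp (X.2.2 i.castSucc) (X.2.2 i.succ)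
      (X.2.1 i.castSucc_lt_succ) j
  have hcol : (Matrix.of fun i j : Fin N =>
      (X.1 i.succ ^ (j.1 + 1) - X.1 i.castSucc ^ (j.1 + 1)) / (1 - q ^ (j.1 + 1))).det =
      vprod X.1 / qpochR q q N := by
    rw [← det_succ_sub_castSucc_pow, qpochR_self_eq_prod, div_eq_inv_mul, ← Finset.prod_inv_distrib,
      ← Matrix.det_mul_row]
    simp only [div_eq_inv_mul, Matrix.of_apply]
  simpa only [det_mul_pow, hcol] using h

theorem hasSum_qlink (hq0 : 0 < q) (hq1 : q < 1) (hzm : zm < 0) (hzp : 0 < zp) {N : ℕ}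
    (X : Conf q zm zp (N + 1)) : HasSum (fun Y => qlink q zm zp N X Y) 1 := by
  have hX := (vprod_pos X.2.1).ne'
  have hpoch := (qpochR_self_pos hq0.le hq1 N).ne'
  have h := (hasSum_prod_abs_mul_vprod hq0 hq1 hzm hzp X).mul_left (qpochR q q N / vprod X.1)
  rw [div_mul_div_cancel₀ hX, div_self hpoch, ← hasSum_Conf_iff] at h
  · refine h.congr_fun fun Y => ?_
    by_cases hY : Interlaces q zm zp Y X
    · rw [qlink, if_pos hY, indicator_of_mem (mem_univ_pi.2 hY)]
      ring
    · rw [qlink, if_neg hY, indicator_of_notMem fun hmem => hY (mem_univ_pi.1 hmem), mul_zero]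
  · intro y hy
    have hmem : ∀ i : Fin N, y i ∈ qInterval q zm zp (X.1 i.castSucc) (X.1 i.succ) := by
      simpa using mem_of_indicator_ne_zero (right_ne_zero_of_mul hy)
    exact ⟨fun i j hij => lt_of_mem_qInterval
      (X.2.1.monotone (Fin.succ_le_castSucc_iff.2 hij)) (hmem i) (hmem j),
      fun i => (mem_qInterval_iff.1 (hmem i)).1⟩

end Link

/-! ### Positive pairs of parameters and their infinite products -/

/-- The quadratic `1 - s x + p x²`, that is `(1 - a x)(1 - b x)` for `s = a + b`, `p = a b`. It is
written through `s` and `p` because these are real even when `a` and `b` are not. -/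
def quadFactor (s p x : ℝ) : ℝ := 1 - s * x + p * x ^ 2

/-- The product `(a x; q)_∞ (b x; q)_∞` for `s = a + b`, `p = a b`, as a real function of `x`. -/
def quadProd (q s p x : ℝ) : ℝ := ∏' m : ℕ, quadFactor s p (x * q ^ m)

/-- A pair of parameters `a`, `b`, real or complex conjugate, for which `(1 - a x)(1 - b x) > 0`
on the lattice. This is what the weights need from an admissible pair. -/
structure PositivePair (q zm zp : ℝ) (a b : ℂ) : Prop where
  add_im : (a + b).im = 0
  mul_im : (a * b).im = 0
  quadFactor_pos : ∀ x ∈ Lambda q zm zp, 0 < quadFactor (a + b).re (a * b).re x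

section PositivePair

variable {q zm zp : ℝ}

theorem tendsto_quadFactor_div_sq (s p : ℝ) {c : ℝ} (hc : c ≠ 0) :
    Tendsto (fun x => quadFactor s p (x / c) / x ^ 2) (Bornology.cobounded ℝ) (𝓝 (p / c ^ 2)) := by
  have hinv : Tendsto (fun x : ℝ => x⁻¹) (Bornology.cobounded ℝ) (𝓝 0) := tendsto_inv₀_cobounded
  have hlim : Tendsto (fun x : ℝ => (x⁻¹) ^ 2 - s / c * x⁻¹ + p / c ^ 2) (Bornology.cobounded ℝ)
      (𝓝 (0 ^ 2 - s / c * 0 + p / c ^ 2)) :=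
    ((hinv.pow 2).sub (hinv.const_mul _)).add_const _
  simp only [ne_eq, OfNat.ofNat_ne_zero, not_false_eq_true, zero_pow, mul_zero, sub_zero,
    zero_add] at hlim
  refine hlim.congr' ?_
  filter_upwards [Bornology.eventually_ne_cobounded (0 : ℝ)] with x hx
  unfold quadFactor
  field_simp

theorem tendsto_mul_pow_nhds_zero (hq0 : 0 ≤ q) (hq1 : q < 1) (x : ℝ) :
    Tendsto (fun n : ℕ => x * q ^ n) atTop (𝓝 0) := by
  simpa using (tendsto_pow_atTop_nhds_zero_of_lt_one hq0 hq1).const_mul x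

theorem tendsto_div_pow_cobounded (hq0 : 0 < q) (hq1 : q < 1) {x : ℝ} (hx : x ≠ 0) :
    Tendsto (fun n : ℕ => x / q ^ n) atTop (Bornology.cobounded ℝ) := by
  have hne : Tendsto (fun n : ℕ => x⁻¹ * q ^ n) atTop (𝓝[≠] 0) :=
    tendsto_nhdsWithin_iff.2 ⟨tendsto_mul_pow_nhds_zero hq0.le hq1 x⁻¹,
      .of_forall fun n => mul_ne_zero (inv_ne_zero hx) (pow_ne_zero n hq0.ne')⟩
  simpa [Function.comp_def, div_eq_mul_inv, mul_comm] using tendsto_inv₀_nhdsNE_zero.comp hne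

theorem nonneg_of_quadFactor_pos (hq0 : 0 < q) (hq1 : q < 1) (hzp : 0 < zp) {s p : ℝ}
    (h : ∀ x ∈ Lambda q zm zp, 0 < quadFactor s p x) : 0 ≤ p := by
  have hlim := (tendsto_quadFactor_div_sq s p one_ne_zero).comp
    (tendsto_div_pow_cobounded hq0 hq1 hzp.ne')
  simp only [div_one, one_pow] at hlim
  have hmem (n : ℕ) : zp / q ^ n ∈ Lambda q zm zp :=
    div_pow_mem_Lambda hq0 (.inr ⟨0, by simp⟩) n
  exact ge_of_tendsto' hlim fun n => div_nonneg (h _ (hmem n)).le (sq_nonneg _)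

theorem quadFactor_mul_pow (q s p x : ℝ) (m : ℕ) :
    quadFactor s p (x * q ^ m) = 1 + (p * x ^ 2 * q ^ m - s * x) * q ^ m := by
  unfold quadFactor
  ring

theorem norm_quadFactor_sub_one_le (hq0 : 0 ≤ q) (hq1 : q ≤ 1) (s p x : ℝ) (m : ℕ) :
    ‖(p * x ^ 2 * q ^ m - s * x) * q ^ m‖ ≤ (|p| * x ^ 2 + |s| * |x|) * q ^ m := by
  rw [norm_mul, Real.norm_of_nonneg (pow_nonneg hq0 m)]
  gcongr
  refine (norm_sub_le _ _).trans ?_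
  simp only [Real.norm_eq_abs, abs_mul, abs_pow, sq_abs, abs_of_nonneg hq0]
  exact add_le_add_left (mul_le_of_le_one_right (by positivity) (pow_le_one₀ hq0 hq1)) _

theorem summable_quadFactor_sub_one (hq0 : 0 ≤ q) (hq1 : q < 1) (s p x : ℝ) :
    Summable fun m : ℕ => (p * x ^ 2 * q ^ m - s * x) * q ^ m :=
  .of_norm_bounded ((summable_geometric_of_lt_one hq0 hq1).mul_left _)
    (norm_quadFactor_sub_one_le hq0 hq1.le s p x)

theorem multipliable_quadFactor (hq0 : 0 ≤ q) (hq1 : q < 1) (s p x : ℝ) :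
    Multipliable fun m : ℕ => quadFactor s p (x * q ^ m) := by
  simpa only [quadFactor_mul_pow] using
    Real.multipliable_one_add_of_summable (summable_quadFactor_sub_one hq0 hq1 s p x)

theorem quadProd_eq_mul (hq0 : 0 ≤ q) (hq1 : q < 1) (s p x : ℝ) :
    quadProd q s p x = quadFactor s p x * quadProd q s p (x * q) := by
  have hshift (m : ℕ) : x * q ^ (m + 1) = x * q * q ^ m := by ring
  unfold quadProd
  rw [tprod_eq_zero_mul']
  · simp only [hshift, pow_zero, mul_one]
  · simpa only [hshift] using multipliable_quadFactor hq0 hq1 s p (x * q)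

theorem quadProd_pos (hq0 : 0 < q) (hq1 : q < 1) {s p : ℝ}
    (h : ∀ x ∈ Lambda q zm zp, 0 < quadFactor s p x) {x : ℝ} (hx : x ∈ Lambda q zm zp) :
    0 < quadProd q s p x := by
  rw [quadProd, ← Real.rexp_tsum_eq_tprod fun m => h _ (mul_pow_mem_Lambda hq0 hx m)]
  · positivity
  · simp only [quadFactor_mul_pow]
    exact Real.summable_log_one_add_of_summable (summable_quadFactor_sub_one hq0.le hq1 s p x)

theorem tendsto_quadProd_nhds_zero (hq0 : 0 ≤ q) (hq1 : q < 1) (s p : ℝ) :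
    Tendsto (quadProd q s p) (𝓝 0) (𝓝 1) := by
  suffices hlim : Tendsto (quadProd q s p) (𝓝 0) (𝓝 (∏' _ : ℕ, (1 + 0 : ℝ))) by
    simpa using hlim
  unfold quadProd
  simp only [quadFactor_mul_pow]
  refine tendsto_tprod_one_add_of_dominated_convergence (R := ℝ) (g := fun _ => 0)
    (f := fun x m => (p * x ^ 2 * q ^ m - s * x) * q ^ m)
    ((summable_geometric_of_lt_one hq0 hq1).mul_left (|p| + |s|)) (fun m => ?_) ?_
  · have : Continuous fun x : ℝ => (p * x ^ 2 * q ^ m - s * x) * q ^ m := by fun_prop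
    simpa using this.tendsto 0
  · filter_upwards [Metric.closedBall_mem_nhds (0 : ℝ) one_pos] with x hx m
    have hx' : |x| ≤ 1 := by simpa using hx
    refine (norm_quadFactor_sub_one_le hq0 hq1.le s p x m).trans ?_
    gcongr
    · exact mul_le_of_le_one_right (abs_nonneg p) (sq_le_one_iff_abs_le_one x |>.2 hx')
    · exact mul_le_of_le_one_right (abs_nonneg s) hx'

theorem multipliable_one_sub_mul_pow (hq0 : 0 ≤ q) (hq1 : q < 1) (z : ℂ) :
    Multipliable fun m : ℕ => 1 - z * (q : ℂ) ^ m := by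
  have hnorm : ‖(q : ℂ)‖ < 1 := by simpa [abs_of_nonneg hq0] using hq1
  simpa only [sub_eq_add_neg] using multipliable_one_add_of_summable
    ((summable_geometric_of_norm_lt_one hnorm).mul_left z).neg.norm

theorem qpochInf_mul_qpochInf (hq0 : 0 ≤ q) (hq1 : q < 1) {a b : ℂ} (hadd : (a + b).im = 0)
    (hmul : (a * b).im = 0) (x : ℝ) :
    qpochInf (a * x) q * qpochInf (b * x) q = quadProd q (a + b).re (a * b).re x := by
  have hadd' : ((a + b).re : ℂ) = a + b := Complex.ext rfl (by simpa using hadd.symm)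
  have hmul' : ((a * b).re : ℂ) = a * b := Complex.ext rfl (by simpa using hmul.symm)
  have hcast : (quadProd q (a + b).re (a * b).re x : ℂ) =
      ∏' m : ℕ, (quadFactor (a + b).re (a * b).re (x * q ^ m) : ℂ) :=
    (multipliable_quadFactor hq0 hq1 _ _ x).map_tprod Complex.ofRealHom Complex.continuous_ofReal
  rw [hcast, qpochInf, qpochInf, ← (multipliable_one_sub_mul_pow hq0 hq1 _).tprod_mul
    (multipliable_one_sub_mul_pow hq0 hq1 _)]
  congr 1 with m
  push_cast [quadFactor, hadd', hmul']
  ring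

theorem mul_inv_pos_of_neighbors (hq0 : 0 < q) (hq1 : q < 1) (hzm : zm < 0) (hzp : 0 < zp)
    {s t u v : ℝ} (hs : s ∈ Lambda q zm zp) (ht : t ∈ Lambda q zm zp)
    (hgap : ∀ x ∈ Lambda q zm zp, ¬ (s < x ∧ x < t)) (hu : u ∈ Ioo s t) (hv : v ∈ Ioo s t) :
    0 < u * v := by
  have hside : 0 < s ∨ t < 0 := by
    by_contra! hside
    have hs0 := hside.1.lt_of_ne (ne_zero_of_mem_Lambda hq0 hzm hzp hs)
    have ht0 := hside.2.lt_of_ne' (ne_zero_of_mem_Lambda hq0 hzm hzp ht)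
    have htq := mul_pow_mem_Lambda hq0 ht 1
    rw [pow_one] at htq
    exact hgap _ htq ⟨by nlinarith, by nlinarith⟩
  rcases hside with h | h
  · exact mul_pos (h.trans hu.1) (h.trans hv.1)
  · exact mul_pos_of_neg_of_neg (hu.2.trans h) (hv.2.trans h)

theorem quadFactor_pos_of_neighbors (hq0 : 0 < q) (hq1 : q < 1) (hzm : zm < 0) (hzp : 0 < zp)
    {a b s t : ℝ} (hs : s ∈ Lambda q zm zp) (ht : t ∈ Lambda q zm zp)
    (hgap : ∀ x ∈ Lambda q zm zp, ¬ (s < x ∧ x < t)) (ha : a⁻¹ ∈ Ioo s t) (hb : b⁻¹ ∈ Ioo s t)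
    {x : ℝ} (hx : x ∈ Lambda q zm zp) : 0 < quadFactor (a + b) (a * b) x := by
  have hab : 0 < a * b := by
    have := mul_inv_pos_of_neighbors hq0 hq1 hzm hzp hs ht hgap ha hb
    rwa [← mul_inv, inv_pos] at this
  have ha0 : a ≠ 0 := left_ne_zero_of_mul hab.ne'
  have hb0 : b ≠ 0 := right_ne_zero_of_mul hab.ne'
  have hsides : 0 < (a⁻¹ - x) * (b⁻¹ - x) := by
    by_cases hxs : x ≤ s
    · exact mul_pos (sub_pos.2 (hxs.trans_lt ha.1)) (sub_pos.2 (hxs.trans_lt hb.1))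
    · have htx : t ≤ x := le_of_not_gt fun hxt => hgap x hx ⟨lt_of_not_ge hxs, hxt⟩
      exact mul_pos_of_neg_of_neg (sub_neg.2 (ha.2.trans_le htx)) (sub_neg.2 (hb.2.trans_le htx))
  calc 0 < a * b * ((a⁻¹ - x) * (b⁻¹ - x)) := mul_pos hab hsides
    _ = quadFactor (a + b) (a * b) x := by
      unfold quadFactor
      field_simp
      ring

theorem AdmissiblePair.positivePair (hq0 : 0 < q) (hq1 : q < 1) (hzm : zm < 0) (hzp : 0 < zp)
    {a b : ℂ} (h : AdmissiblePair q zm zp a b) : PositivePair q zm zp a b := by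
  obtain ⟨-, -, ⟨him, rfl⟩ | ⟨ha, hb, s, t, hs, ht, -, hgap, hu, hv⟩⟩ := h
  · refine ⟨by simp, by simp [mul_comm], fun x hx => ?_⟩
    have hx0 := ne_zero_of_mem_Lambda hq0 hzm hzp hx
    calc 0 < (1 - a.re * x) ^ 2 + (a.im * x) ^ 2 := by positivity
      _ = quadFactor (a + starRingEnd ℂ a).re (a * starRingEnd ℂ a).re x := by
        simp only [quadFactor, Complex.add_re, Complex.conj_re, Complex.mul_re, Complex.conj_im,
          mul_neg, sub_neg_eq_add]
        ring
  · lift a to ℝ using ha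
    lift b to ℝ using hb
    norm_cast at hu hv
    refine ⟨by simp, by simp, fun x hx => ?_⟩
    norm_cast
    exact quadFactor_pos_of_neighbors hq0 hq1 hzm hzp hs ht hgap hu hv hx

end PositivePair

/-! ### The weights and their Pearson equation -/

/-- The weight of the q-zw-measure on `N` points without its factor `|x|`. With `s₁ = α + β`,
`p₁ = α β`, `s₂ = γ + δ`, `p₂ = γ δ` the denominator is `(γ q^{1-N} x; q)_∞ (δ q^{1-N} x; q)_∞`. -/
def weightRatio (q s₁ p₁ s₂ p₂ : ℝ) (N : ℕ) (x : ℝ) : ℝ :=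
  quadProd q s₁ p₁ x / quadProd q s₂ p₂ (x * q / q ^ N)

/-- The polynomial `m` of degree `k + 1` for which `x m(x)` times the weight ratio for `N + 1`
points is the q-difference of `x ^ k` times the weight ratio for `N` points. For `k = 0` the
coefficient of the meaningless power `X ^ (k - 1)` vanishes. -/
def pearsonPoly (q s₁ p₁ s₂ p₂ : ℝ) (N k : ℕ) : Polynomial ℝ :=
  .C (p₁ / q ^ (k + 2) - p₂ / q ^ (2 * N)) * .X ^ (k + 1) +
    .C (s₂ / q ^ N - s₁ / q ^ (k + 1)) * .X ^ k + .C (1 / q ^ k - 1) * .X ^ (k - 1)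

section Weight

variable {q zm zp s₁ p₁ s₂ p₂ : ℝ}

theorem weightRatio_succ (hq0 : q ≠ 0) (N : ℕ) (x : ℝ) :
    weightRatio q s₁ p₁ s₂ p₂ (N + 1) x = quadProd q s₁ p₁ x / quadProd q s₂ p₂ (x / q ^ N) := by
  rw [weightRatio, pow_succ, mul_div_mul_right _ _ hq0]

theorem weightRatio_eq_succ_mul (hq0 : 0 < q) (hq1 : q < 1)
    (h₂ : ∀ x ∈ Lambda q zm zp, 0 < quadFactor s₂ p₂ x) (N : ℕ) {x : ℝ}
    (hx : x ∈ Lambda q zm zp) :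
    weightRatio q s₁ p₁ s₂ p₂ N x =
      weightRatio q s₁ p₁ s₂ p₂ (N + 1) x * quadFactor s₂ p₂ (x / q ^ N) := by
  have hfactor := (h₂ _ (div_pow_mem_Lambda hq0 hx N)).ne'
  rw [weightRatio_succ hq0.ne', quadProd_eq_mul hq0.le hq1 s₂ p₂ (x / q ^ N),
    mul_comm (quadFactor s₂ p₂ _), ← div_div, div_mul_cancel₀ _ hfactor, div_mul_eq_mul_div]
  rfl

theorem weightRatio_div (hq0 : 0 < q) (hq1 : q < 1) (N : ℕ) (x : ℝ) :
    weightRatio q s₁ p₁ s₂ p₂ N (x / q) =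
      weightRatio q s₁ p₁ s₂ p₂ (N + 1) x * quadFactor s₁ p₁ (x / q) := by
  rw [weightRatio_succ hq0.ne', weightRatio, quadProd_eq_mul hq0.le hq1 s₁ p₁ (x / q),
    div_mul_cancel₀ x hq0.ne']
  ring

theorem weightRatio_pos (hq0 : 0 < q) (hq1 : q < 1)
    (h₁ : ∀ x ∈ Lambda q zm zp, 0 < quadFactor s₁ p₁ x)
    (h₂ : ∀ x ∈ Lambda q zm zp, 0 < quadFactor s₂ p₂ x) (N : ℕ) {x : ℝ}
    (hx : x ∈ Lambda q zm zp) : 0 < weightRatio q s₁ p₁ s₂ p₂ N x := by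
  have hxq : x * q / q ^ N ∈ Lambda q zm zp := by
    simpa only [pow_one] using div_pow_mem_Lambda hq0 (mul_pow_mem_Lambda hq0 hx 1) N
  exact div_pos (quadProd_pos hq0 hq1 h₁ hx) (quadProd_pos hq0 hq1 h₂ hxq)

theorem tendsto_weightRatio_nhds_zero (hq0 : 0 ≤ q) (hq1 : q < 1) (N : ℕ) :
    Tendsto (weightRatio q s₁ p₁ s₂ p₂ N) (𝓝 0) (𝓝 1) := by
  have harg : Tendsto (fun x : ℝ => x * q / q ^ N) (𝓝 0) (𝓝 0) := by
    simpa using (continuous_id.mul_const q |>.div_const (q ^ N)).tendsto (0 : ℝ)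
  exact div_one (1 : ℝ) ▸ (tendsto_quadProd_nhds_zero hq0 hq1 s₁ p₁).div
    ((tendsto_quadProd_nhds_zero hq0 hq1 s₂ p₂).comp harg) one_ne_zero

theorem mul_pow_lt_mul_pow_of_lt (hq0 : 0 < q) (hq1 : q < 1) (hp₁ : 0 ≤ p₁) (hp : p₁ < p₂ * q)
    {n k : ℕ} (hk : k < n) : p₁ * q ^ n < p₂ * q ^ (k + 2) :=
  calc p₁ * q ^ n ≤ p₁ * q ^ (k + 1) :=
      mul_le_mul_of_nonneg_left (pow_le_pow_of_le_one hq0.le hq1.le hk) hp₁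
    _ < p₂ * q * q ^ (k + 1) := mul_lt_mul_of_pos_right hp (pow_pos hq0 _)
    _ = p₂ * q ^ (k + 2) := by ring

theorem natDegree_pearsonPoly_le (N k : ℕ) :
    (pearsonPoly q s₁ p₁ s₂ p₂ N k).natDegree ≤ k + 1 := by
  unfold pearsonPoly
  refine Polynomial.natDegree_add_le_of_degree_le (Polynomial.natDegree_add_le_of_degree_le
    (Polynomial.natDegree_C_mul_X_pow_le _ _) ?_) ?_ <;>
  exact (Polynomial.natDegree_C_mul_X_pow_le _ _).trans (by omega)

theorem coeff_pearsonPoly (N k : ℕ) :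
    (pearsonPoly q s₁ p₁ s₂ p₂ N k).coeff (k + 1) = p₁ / q ^ (k + 2) - p₂ / q ^ (2 * N) := by
  have hk : k + 1 ≠ k - 1 := by omega
  simp only [pearsonPoly, Polynomial.coeff_add, Polynomial.coeff_C_mul, Polynomial.coeff_X_pow,
    if_neg hk, if_neg k.succ_ne_self, if_true, mul_one, mul_zero, add_zero]

theorem coeff_pearsonPoly_ne_zero (hq0 : 0 < q) (hq1 : q < 1) (hp₁ : 0 ≤ p₁) (hp : p₁ < p₂ * q)
    {N k : ℕ} (hk : k < 2 * N) : (pearsonPoly q s₁ p₁ s₂ p₂ N k).coeff (k + 1) ≠ 0 := by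
  rw [coeff_pearsonPoly, sub_ne_zero]
  refine ((div_lt_div_iff₀ (pow_pos hq0 _) (pow_pos hq0 _)).2 ?_).ne
  exact mul_pow_lt_mul_pow_of_lt hq0 hq1 hp₁ hp hk

theorem mul_eval_pearsonPoly (hq0 : q ≠ 0) (N k : ℕ) (x : ℝ) :
    x * (pearsonPoly q s₁ p₁ s₂ p₂ N k).eval x =
      quadFactor s₁ p₁ (x / q) * (x / q) ^ k - quadFactor s₂ p₂ (x / q ^ N) * x ^ k := by
  have hlow : x * ((1 / q ^ k - 1) * x ^ (k - 1)) = (1 / q ^ k - 1) * x ^ k := by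
    cases k with
    | zero => simp
    | succ k => rw [Nat.add_sub_cancel, pow_succ x]; ring
  simp only [pearsonPoly, Polynomial.eval_add, Polynomial.eval_mul, Polynomial.eval_C,
    Polynomial.eval_pow, Polynomial.eval_X, mul_add x, hlow, quadFactor, div_pow]
  field_simp
  ring

theorem mul_weightRatio_mul_eval_pearsonPoly (hq0 : 0 < q) (hq1 : q < 1)
    (h₂ : ∀ x ∈ Lambda q zm zp, 0 < quadFactor s₂ p₂ x) (N k : ℕ) {x : ℝ}
    (hx : x ∈ Lambda q zm zp) :
    x * weightRatio q s₁ p₁ s₂ p₂ (N + 1) x * (pearsonPoly q s₁ p₁ s₂ p₂ N k).eval x =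
      weightRatio q s₁ p₁ s₂ p₂ N (x / q) * (x / q) ^ k -
        weightRatio q s₁ p₁ s₂ p₂ N x * x ^ k := by
  rw [mul_right_comm, mul_eval_pearsonPoly hq0.ne', weightRatio_div hq0 hq1,
    weightRatio_eq_succ_mul hq0 hq1 h₂ N hx]
  ring

theorem weightRatio_div_mul_pow_div (hq0 : 0 < q) (hq1 : q < 1)
    (h₁ : ∀ x ∈ Lambda q zm zp, 0 < quadFactor s₁ p₁ x)
    (h₂ : ∀ x ∈ Lambda q zm zp, 0 < quadFactor s₂ p₂ x) (N k : ℕ) {x : ℝ}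
    (hx : x ∈ Lambda q zm zp) (hx0 : x ≠ 0) :
    weightRatio q s₁ p₁ s₂ p₂ N (x / q) * (x / q) ^ k / (weightRatio q s₁ p₁ s₂ p₂ N x * x ^ k) =
      quadFactor s₁ p₁ (x / q) / x ^ 2 / (quadFactor s₂ p₂ (x / q ^ N) / x ^ 2) / q ^ k := by
  have hweight := (weightRatio_pos hq0 hq1 h₁ h₂ (N + 1) hx).ne'
  have hfactor := (h₂ _ (div_pow_mem_Lambda hq0 hx N)).ne'
  rw [weightRatio_div hq0 hq1, weightRatio_eq_succ_mul hq0 hq1 h₂ N hx, div_pow]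
  field_simp

theorem summable_weightRatio_div_pow (hq0 : 0 < q) (hq1 : q < 1) (hzm : zm < 0) (hzp : 0 < zp)
    (h₁ : ∀ x ∈ Lambda q zm zp, 0 < quadFactor s₁ p₁ x)
    (h₂ : ∀ x ∈ Lambda q zm zp, 0 < quadFactor s₂ p₂ x) (hp : p₁ < p₂ * q) {N k : ℕ}
    (hk : k < 2 * N) {y : ℝ} (hy : y ∈ Lambda q zm zp) :
    Summable fun n : ℕ => weightRatio q s₁ p₁ s₂ p₂ N (y / q ^ n) * (y / q ^ n) ^ k := by
  have hp₁ : 0 ≤ p₁ := nonneg_of_quadFactor_pos hq0 hq1 hzp h₁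
  have hp₂ : 0 < p₂ := pos_of_mul_pos_left (hp₁.trans_lt hp) hq0.le
  have hmem (n : ℕ) := div_pow_mem_Lambda hq0 hy n
  have hne (n : ℕ) : y / q ^ n ≠ 0 := ne_zero_of_mem_Lambda hq0 hzm hzp (hmem n)
  have hratio (n : ℕ) :
      weightRatio q s₁ p₁ s₂ p₂ N (y / q ^ (n + 1)) * (y / q ^ (n + 1)) ^ k /
          (weightRatio q s₁ p₁ s₂ p₂ N (y / q ^ n) * (y / q ^ n) ^ k) =
        quadFactor s₁ p₁ (y / q ^ n / q) / (y / q ^ n) ^ 2 /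
          (quadFactor s₂ p₂ (y / q ^ n / q ^ N) / (y / q ^ n) ^ 2) / q ^ k := by
    rw [pow_succ q n, ← div_div y,
      weightRatio_div_mul_pow_div hq0 hq1 h₁ h₂ N k (hmem n) (hne n)]
  have hlim := (((tendsto_quadFactor_div_sq s₁ p₁ hq0.ne').div
    (tendsto_quadFactor_div_sq s₂ p₂ (pow_ne_zero N hq0.ne')) (by positivity)).div_const
      (q ^ k)).comp (tendsto_div_pow_cobounded hq0 hq1 (ne_zero_of_mem_Lambda hq0 hzm hzp hy))
  refine summable_of_ratio_test_tendsto_lt_one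
    (l := p₁ / q ^ 2 / (p₂ / (q ^ N) ^ 2) / q ^ k) ?_
    (.of_forall fun n => mul_ne_zero (weightRatio_pos hq0 hq1 h₁ h₂ N (hmem n)).ne'
      (pow_ne_zero k (hne n))) ?_
  · have hlt := mul_pow_lt_mul_pow_of_lt hq0 hq1 hp₁ hp hk
    have heq : p₁ / q ^ 2 / (p₂ / (q ^ N) ^ 2) / q ^ k =
        p₁ * q ^ (2 * N) / (p₂ * q ^ (k + 2)) := by
      field_simp
      ring
    rwa [heq, div_lt_one (by positivity)]
  · have hnonneg : 0 ≤ p₁ / q ^ 2 / (p₂ / (q ^ N) ^ 2) / q ^ k := by positivity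
    rw [← Real.norm_of_nonneg hnonneg]
    exact hlim.norm.congr fun n => by rw [← norm_div, hratio]; rfl

end Weight

/-! ### Moments of the weights -/

section Moments

variable {q zm zp s₁ p₁ s₂ p₂ : ℝ}

theorem hasSum_indicator_Lambda (hq0 : 0 < q) (hq1 : q < 1) (hzm : zm < 0) (hzp : 0 < zp)
    {f : ℝ → ℝ} {a b : ℝ} (ha : HasSum (fun m : ℤ => f (zm * q ^ m)) a)
    (hb : HasSum (fun m : ℤ => f (zp * q ^ m)) b) :
    HasSum ((Lambda q zm zp).indicator f) (a + b) := by
  have hinj {z : ℝ} (hz : z ≠ 0) : Function.Injective fun m : ℤ => z * q ^ m :=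
    (mul_right_injective₀ hz).comp (zpow_right_injective₀ hq0 hq1.ne)
  have hdisj : Disjoint (range fun m : ℤ => zm * q ^ m) (range fun m : ℤ => zp * q ^ m) := by
    rw [Set.disjoint_left]
    rintro _ ⟨m, rfl⟩ ⟨n, hn⟩
    exact ((mul_neg_of_neg_of_pos hzm (zpow_pos hq0 m)).trans
      (mul_pos hzp (zpow_pos hq0 n))).ne' hn
  have hLambda : Lambda q zm zp =
      (range fun m : ℤ => zm * q ^ m) ∪ range fun m : ℤ => zp * q ^ m := by
    ext x
    simp only [Lambda, mem_union, mem_ofPred_eq, mem_range, eq_comm]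
  rw [hLambda, indicator_union_of_disjoint hdisj]
  exact ((hasSum_indicator_range_iff (hinj hzm.ne)).2 ha).add
    ((hasSum_indicator_range_iff (hinj hzp.ne')).2 hb)

theorem tendsto_weightRatio_mul_pow (hq0 : 0 < q) (hq1 : q < 1) (N k : ℕ) (x : ℝ) :
    Tendsto (fun n : ℕ => weightRatio q s₁ p₁ s₂ p₂ N (x * q ^ n) * (x * q ^ n) ^ k) atTop
      (𝓝 (0 ^ k)) := by
  have hx := tendsto_mul_pow_nhds_zero hq0.le hq1 x
  simpa only [one_mul, Function.comp_apply] using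
    ((tendsto_weightRatio_nhds_zero hq0.le hq1 N).comp hx).mul (hx.pow k)

theorem summable_weightRatio_mul_eval (hq0 : 0 < q) (hq1 : q < 1) (N : ℕ) (p : Polynomial ℝ)
    (x : ℝ) : Summable fun n : ℕ =>
      x * q ^ n * weightRatio q s₁ p₁ s₂ p₂ N (x * q ^ n) * p.eval (x * q ^ n) := by
  have hx := tendsto_mul_pow_nhds_zero hq0.le hq1 x
  have hlim := ((tendsto_weightRatio_nhds_zero (s₁ := s₁) (p₁ := p₁) (s₂ := s₂) (p₂ := p₂)
    hq0.le hq1 N).comp hx).mul (p.continuous.continuousAt.tendsto.comp hx)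
  refine summable_of_isBigO_nat ((summable_geometric_of_lt_one hq0.le hq1).mul_left x) ?_
  simpa only [mul_one, mul_assoc, Function.comp_apply] using
    (Asymptotics.isBigO_refl (fun n : ℕ => x * q ^ n) atTop).mul (hlim.isBigO_one ℝ)

theorem hasSum_pearson_div_pow (hq0 : 0 < q) (hq1 : q < 1) (hzm : zm < 0) (hzp : 0 < zp)
    (h₁ : ∀ x ∈ Lambda q zm zp, 0 < quadFactor s₁ p₁ x)
    (h₂ : ∀ x ∈ Lambda q zm zp, 0 < quadFactor s₂ p₂ x) (hp : p₁ < p₂ * q) {N k : ℕ}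
    (hk : k < 2 * N) {y : ℝ} (hy : y ∈ Lambda q zm zp) :
    HasSum (fun n : ℕ => y / q ^ n * weightRatio q s₁ p₁ s₂ p₂ (N + 1) (y / q ^ n) *
      (pearsonPoly q s₁ p₁ s₂ p₂ N k).eval (y / q ^ n))
      (-(weightRatio q s₁ p₁ s₂ p₂ N y * y ^ k)) := by
  set g : ℕ → ℝ := fun n => weightRatio q s₁ p₁ s₂ p₂ N (y / q ^ n) * (y / q ^ n) ^ k
  have hg : Summable g := summable_weightRatio_div_pow hq0 hq1 hzm hzp h₁ h₂ hp hk hy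
  have hshift : HasSum (fun n => g (n + 1)) (∑' n, g n - g 0) := by
    simpa using (hasSum_nat_add_iff' 1).2 hg.hasSum
  have htele := hshift.sub hg.hasSum
  rw [sub_sub_cancel_left] at htele
  simpa [g, mul_weightRatio_mul_eval_pearsonPoly hq0 hq1 h₂ N k (div_pow_mem_Lambda hq0 hy _),
    pow_succ, div_div] using htele

theorem hasSum_pearson_mul_pow (hq0 : 0 < q) (hq1 : q < 1)
    (h₂ : ∀ x ∈ Lambda q zm zp, 0 < quadFactor s₂ p₂ x) (N k : ℕ) {x : ℝ}
    (hx : x ∈ Lambda q zm zp) :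
    HasSum (fun n : ℕ => x * q ^ n * weightRatio q s₁ p₁ s₂ p₂ (N + 1) (x * q ^ n) *
      (pearsonPoly q s₁ p₁ s₂ p₂ N k).eval (x * q ^ n))
      (weightRatio q s₁ p₁ s₂ p₂ N (x / q) * (x / q) ^ k - 0 ^ k) := by
  rw [(summable_weightRatio_mul_eval hq0 hq1 _ _ x).hasSum_iff_tendsto_nat]
  set g : ℕ → ℝ := fun n =>
    weightRatio q s₁ p₁ s₂ p₂ N (x / q * q ^ n) * (x / q * q ^ n) ^ k with hg
  have hstep (n : ℕ) : x * q ^ n * weightRatio q s₁ p₁ s₂ p₂ (N + 1) (x * q ^ n) *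
      (pearsonPoly q s₁ p₁ s₂ p₂ N k).eval (x * q ^ n) = g n - g (n + 1) := by
    have hsucc : x / q * q ^ (n + 1) = x * q ^ n := by
      rw [pow_succ', ← mul_assoc, div_mul_cancel₀ x hq0.ne']
    rw [mul_weightRatio_mul_eval_pearsonPoly hq0 hq1 h₂ N k (mul_pow_mem_Lambda hq0 hx n), hg]
    simp only [hsucc, div_mul_eq_mul_div]
  have hlim : Tendsto g atTop (𝓝 (0 ^ k)) := tendsto_weightRatio_mul_pow hq0 hq1 N k (x / q)
  simp only [hstep, Finset.sum_range_sub']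
  simpa [g] using hlim.const_sub (g 0)

theorem hasSum_pearson_zpow (hq0 : 0 < q) (hq1 : q < 1) (hzm : zm < 0) (hzp : 0 < zp)
    (h₁ : ∀ x ∈ Lambda q zm zp, 0 < quadFactor s₁ p₁ x)
    (h₂ : ∀ x ∈ Lambda q zm zp, 0 < quadFactor s₂ p₂ x) (hp : p₁ < p₂ * q) {N k : ℕ}
    (hk : k < 2 * N) {z : ℝ} (hz : z ∈ Lambda q zm zp) :
    HasSum (fun m : ℤ => z * q ^ m * weightRatio q s₁ p₁ s₂ p₂ (N + 1) (z * q ^ m) *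
      (pearsonPoly q s₁ p₁ s₂ p₂ N k).eval (z * q ^ m)) (-0 ^ k) := by
  have hzq : z / q ∈ Lambda q zm zp := by simpa only [pow_one] using div_pow_mem_Lambda hq0 hz 1
  have hneg (n : ℕ) : z * q ^ (-((n : ℤ) + 1)) = z / q / q ^ n := by
    rw [zpow_neg, ← div_eq_mul_inv, div_div, ← pow_succ']
    norm_cast
  have h := HasSum.of_nat_of_neg_add_one (f := fun m : ℤ =>
      z * q ^ m * weightRatio q s₁ p₁ s₂ p₂ (N + 1) (z * q ^ m) *
        (pearsonPoly q s₁ p₁ s₂ p₂ N k).eval (z * q ^ m))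
    (by simpa only [zpow_natCast] using hasSum_pearson_mul_pow hq0 hq1 h₂ N k hz)
    (by simpa only [hneg] using hasSum_pearson_div_pow hq0 hq1 hzm hzp h₁ h₂ hp hk hzq)
  rwa [← sub_eq_add_neg, sub_sub_cancel_left] at h

theorem hasSum_indicator_Lambda_pearson (hq0 : 0 < q) (hq1 : q < 1) (hzm : zm < 0) (hzp : 0 < zp)
    (h₁ : ∀ x ∈ Lambda q zm zp, 0 < quadFactor s₁ p₁ x)
    (h₂ : ∀ x ∈ Lambda q zm zp, 0 < quadFactor s₂ p₂ x) (hp : p₁ < p₂ * q) {N k : ℕ}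
    (hk : k < 2 * N) :
    HasSum ((Lambda q zm zp).indicator fun x => |x| * weightRatio q s₁ p₁ s₂ p₂ (N + 1) x *
      (pearsonPoly q s₁ p₁ s₂ p₂ N k).eval x) 0 := by
  have hzm_mem : zm ∈ Lambda q zm zp := .inl ⟨0, by simp⟩
  have hzp_mem : zp ∈ Lambda q zm zp := .inr ⟨0, by simp⟩
  rw [← neg_add_cancel (-0 ^ k : ℝ)]
  refine hasSum_indicator_Lambda hq0 hq1 hzm hzp ?_ ?_
  · simpa only [abs_of_neg (mul_neg_of_neg_of_pos hzm (zpow_pos hq0 _)), neg_mul] using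
      (hasSum_pearson_zpow hq0 hq1 hzm hzp h₁ h₂ hp hk hzm_mem).neg
  · simpa only [abs_of_pos (mul_pos hzp (zpow_pos hq0 _))] using
      hasSum_pearson_zpow hq0 hq1 hzm hzp h₁ h₂ hp hk hzp_mem

theorem hasSum_indicator_leftCut_pearson (hq0 : 0 < q) (hq1 : q < 1) (hzm : zm < 0) (hzp : 0 < zp)
    (h₁ : ∀ x ∈ Lambda q zm zp, 0 < quadFactor s₁ p₁ x)
    (h₂ : ∀ x ∈ Lambda q zm zp, 0 < quadFactor s₂ p₂ x) (hp : p₁ < p₂ * q) {N k : ℕ}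
    (hk : k < 2 * N) {y : ℝ} (hy : y ∈ Lambda q zm zp) :
    HasSum ((leftCut y ∩ Lambda q zm zp).indicator fun x =>
      |x| * weightRatio q s₁ p₁ s₂ p₂ (N + 1) x * (pearsonPoly q s₁ p₁ s₂ p₂ N k).eval x)
      (weightRatio q s₁ p₁ s₂ p₂ N y * y ^ k) := by
  have hy0 := ne_zero_of_mem_Lambda hq0 hzm hzp hy
  have hinj := injective_div_pow hq0 hq1 hy0
  have htail := hasSum_pearson_div_pow hq0 hq1 hzm hzp h₁ h₂ hp hk hy
  rcases hy0.lt_or_gt with hneg | hpos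
  · rw [leftCut_of_neg hneg, inter_comm, ← range_div_pow_eq_of_neg hq0 hq1 hzm hzp hy hneg,
      hasSum_indicator_range_iff hinj]
    simpa only [Function.comp_def, abs_of_neg (div_neg_of_neg_of_pos hneg (pow_pos hq0 _)),
      neg_mul, neg_neg] using htail.neg
  · have hcut : leftCut y ∩ Lambda q zm zp = Lambda q zm zp \ (Lambda q zm zp ∩ Ici y) := by
      rw [leftCut_of_pos hpos, sdiff_self_inter, ← compl_Iio, sdiff_compl, inter_comm]
    rw [hcut, indicator_sdiff' inter_subset_left,
      ← neg_neg (weightRatio q s₁ p₁ s₂ p₂ N y * y ^ k), ← zero_sub (-_)]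
    refine (hasSum_indicator_Lambda_pearson hq0 hq1 hzm hzp h₁ h₂ hp hk).sub ?_
    rw [← range_div_pow_eq_of_pos hq0 hq1 hzm hzp hy hpos, hasSum_indicator_range_iff hinj]
    simpa only [Function.comp_def, abs_of_pos (div_pos hpos (pow_pos hq0 _))] using htail

theorem summable_mul_weightRatio_zpow (hq0 : 0 < q) (hq1 : q < 1) (hzm : zm < 0) (hzp : 0 < zp)
    (h₁ : ∀ x ∈ Lambda q zm zp, 0 < quadFactor s₁ p₁ x)
    (h₂ : ∀ x ∈ Lambda q zm zp, 0 < quadFactor s₂ p₂ x) (hp : p₁ < p₂ * q) (N : ℕ) {z : ℝ}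
    (hz : z ∈ Lambda q zm zp) :
    Summable fun m : ℤ => z * q ^ m * weightRatio q s₁ p₁ s₂ p₂ (N + 1) (z * q ^ m) := by
  have hneg (n : ℕ) : z * q ^ (-(n : ℤ)) = z / q ^ n := by
    rw [zpow_neg, ← div_eq_mul_inv, zpow_natCast]
  refine .of_nat_of_neg ?_ ?_
  · simpa using summable_weightRatio_mul_eval (s₁ := s₁) (p₁ := p₁) (s₂ := s₂) (p₂ := p₂)
      hq0 hq1 (N + 1) 1 z
  · simpa only [hneg, pow_one, mul_comm] using summable_weightRatio_div_pow hq0 hq1 hzm hzp h₁ h₂ hp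
      (by omega : 1 < 2 * (N + 1)) hz

theorem summable_indicator_Lambda_weight (hq0 : 0 < q) (hq1 : q < 1) (hzm : zm < 0) (hzp : 0 < zp)
    (h₁ : ∀ x ∈ Lambda q zm zp, 0 < quadFactor s₁ p₁ x)
    (h₂ : ∀ x ∈ Lambda q zm zp, 0 < quadFactor s₂ p₂ x) (hp : p₁ < p₂ * q) (N : ℕ) :
    Summable ((Lambda q zm zp).indicator fun x => |x| * weightRatio q s₁ p₁ s₂ p₂ (N + 1) x) := by
  have hneg := summable_mul_weightRatio_zpow hq0 hq1 hzm hzp h₁ h₂ hp N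
    (.inl ⟨0, by simp⟩ : zm ∈ Lambda q zm zp)
  have hpos := summable_mul_weightRatio_zpow hq0 hq1 hzm hzp h₁ h₂ hp N
    (.inr ⟨0, by simp⟩ : zp ∈ Lambda q zm zp)
  refine (hasSum_indicator_Lambda hq0 hq1 hzm hzp (Summable.hasSum ?_)
    (Summable.hasSum ?_)).summable
  · simpa only [abs_of_neg (mul_neg_of_neg_of_pos hzm (zpow_pos hq0 _)), neg_mul] using hneg.neg
  · simpa only [abs_of_pos (mul_pos hzp (zpow_pos hq0 _))] using hpos

end Moments

/-! ### Summation over interlacing configurations -/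

section Interlacing

variable {q zm zp s₁ p₁ s₂ p₂ : ℝ}

-- With the weights times the Pearson polynomials in the columns, every cumulative sum appearing in
-- the chain determinant is one of the functions `y ↦ φ_N(y) y ^ k`.
theorem hasSum_indicator_chain_weight (hq0 : 0 < q) (hq1 : q < 1) (hzm : zm < 0) (hzp : 0 < zp)
    (h₁ : ∀ x ∈ Lambda q zm zp, 0 < quadFactor s₁ p₁ x)
    (h₂ : ∀ x ∈ Lambda q zm zp, 0 < quadFactor s₂ p₂ x) (hp : p₁ < p₂ * q) {N : ℕ}
    (Y : Conf q zm zp N) :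
    HasSum ({x : Fin (N + 1) → ℝ |
          ∀ k : Fin N, x k.castSucc ∈ leftCut (Y.1 k) ∧ x k.succ ∉ leftCut (Y.1 k)}.indicator <|
        (univ.pi fun _ => Lambda q zm zp).indicator fun x =>
          (∏ k : Fin N, (pearsonPoly q s₁ p₁ s₂ p₂ N k).coeff (k + 1)) *
            ((∏ i, |x i| * weightRatio q s₁ p₁ s₂ p₂ (N + 1) (x i)) * vprod x))
      ((-1) ^ N * (∑' x, (Lambda q zm zp).indicator
          (fun x => |x| * weightRatio q s₁ p₁ s₂ p₂ (N + 1) x) x) *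
        ((∏ i, weightRatio q s₁ p₁ s₂ p₂ N (Y.1 i)) * vprod Y.1)) := by
  let w (x : ℝ) : ℝ := |x| * weightRatio q s₁ p₁ s₂ p₂ (N + 1) x
  let p : Fin (N + 1) → Polynomial ℝ := Fin.cases 1 fun k => pearsonPoly q s₁ p₁ s₂ p₂ N k
  have hdeg (j : Fin (N + 1)) : (p j).natDegree ≤ j :=
    j.cases (by simp [p]) fun k => natDegree_pearsonPoly_le N k
  have hk (k : Fin N) : k.1 < 2 * N := by omega
  have hcoeff : ∏ j, (p j).coeff j =
      ∏ k : Fin N, (pearsonPoly q s₁ p₁ s₂ p₂ N k).coeff (k + 1) := by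
    simp [p, Fin.prod_univ_succ]
  have hdet (x : Fin (N + 1) → ℝ) : (Matrix.of fun i j =>
      (Lambda q zm zp).indicator (fun y => w y * (p j).eval y) (x i)).det =
      (univ.pi fun _ => Lambda q zm zp).indicator (fun x =>
        (∏ k : Fin N, (pearsonPoly q s₁ p₁ s₂ p₂ N k).coeff (k + 1)) *
          ((∏ i, w (x i)) * vprod x)) x := by
    simp only [← indicator_pi_det, det_mul_eval_of_natDegree_le (fun _ => w _) _ p hdeg, hcoeff]
  have hmono : Monotone fun k => leftCut (Y.1 k) := monotone_leftCut.comp Y.2.1.monotone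
  have h := hasSum_indicator_chain_det hmono
    (f := fun j => (Lambda q zm zp).indicator fun x => w x * (p j).eval x)
    (by simpa [p] using (summable_indicator_Lambda_weight hq0 hq1 hzm hzp h₁ h₂ hp N).hasSum)
    (fun k => hasSum_indicator_Lambda_pearson hq0 hq1 hzm hzp h₁ h₂ hp (hk k))
    (fun i k => by
      rw [indicator_indicator]
      exact hasSum_indicator_leftCut_pearson hq0 hq1 hzm hzp h₁ h₂ hp (hk k) (Y.2.2 i))
  simpa only [hdet, det_mul_pow] using h

theorem exists_hasSum_indicator_interlaces (hq0 : 0 < q) (hq1 : q < 1) (hzm : zm < 0)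
    (hzp : 0 < zp) (h₁ : ∀ x ∈ Lambda q zm zp, 0 < quadFactor s₁ p₁ x)
    (h₂ : ∀ x ∈ Lambda q zm zp, 0 < quadFactor s₂ p₂ x) (hp : p₁ < p₂ * q) (N : ℕ) :
    ∃ C : ℝ, ∀ Y : Conf q zm zp N,
      HasSum ({X : Conf q zm zp (N + 1) | Interlaces q zm zp Y X}.indicator fun X =>
          (∏ i, |X.1 i| * weightRatio q s₁ p₁ s₂ p₂ (N + 1) (X.1 i)) * vprod X.1)
        (C * ((∏ i, weightRatio q s₁ p₁ s₂ p₂ N (Y.1 i)) * vprod Y.1)) := by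
  set c : ℝ := ∏ k : Fin N, (pearsonPoly q s₁ p₁ s₂ p₂ N k).coeff (k + 1) with hc
  have hc0 : c ≠ 0 := Finset.prod_ne_zero_iff.2 fun k _ =>
    coeff_pearsonPoly_ne_zero hq0 hq1 (nonneg_of_quadFactor_pos hq0 hq1 hzp h₁) hp (by omega)
  refine ⟨c⁻¹ * ((-1) ^ N * ∑' x, (Lambda q zm zp).indicator
    (fun x => |x| * weightRatio q s₁ p₁ s₂ p₂ (N + 1) x) x), fun Y => ?_⟩
  have h := hasSum_indicator_chain_weight hq0 hq1 hzm hzp h₁ h₂ hp Y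
  rw [← hc, ← hasSum_Conf_iff (q := q) (zm := zm) (zp := zp)] at h
  · rw [mul_assoc c⁻¹]
    refine (h.mul_left c⁻¹).congr_fun fun X => ?_
    rw [indicator, indicator]
    simp only [mem_ofPred_eq, interlaces_iff]
    by_cases hX : ∀ k : Fin N, X.1 k.castSucc ∈ leftCut (Y.1 k) ∧ X.1 k.succ ∉ leftCut (Y.1 k)
    · rw [if_pos hX, if_pos hX, indicator_of_mem (mem_univ_pi.2 X.2.2), inv_mul_cancel_left₀ hc0]
    · rw [if_neg hX, if_neg hX, mul_zero]
  · intro x hx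
    have hchain := mem_of_indicator_ne_zero hx
    rw [indicator_of_mem hchain] at hx
    refine ⟨Fin.strictMono_iff_lt_succ.2 fun k => ?_, mem_univ_pi.1 (mem_of_indicator_ne_zero hx)⟩
    exact lt_of_mem_leftCut_of_notMem (hchain k).1 (hchain k).2

end Interlacing

/-! ### Coherency -/

section Kernel

variable {A B : Type*} {u : A → ℝ} {v : B → ℝ} {K : A → B → ℝ} {C : ℝ}

theorem hasSum_of_stochastic (hu : ∀ a, 0 ≤ u a) (hK : ∀ a b, 0 ≤ K a b)
    (hrow : ∀ a, HasSum (fun b => K a b) 1) (hstep : ∀ b, HasSum (fun a => u a * K a b) (C * v b))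
    (hv : Summable v) : HasSum u (C * ∑' b, v b) := by
  have hjoint : Summable fun p : B × A => u p.2 * K p.2 p.1 := by
    refine (summable_prod_of_nonneg fun p => mul_nonneg (hu _) (hK _ _)).2
      ⟨fun b => (hstep b).summable, ?_⟩
    simpa only [(hstep _).tsum_eq] using hv.mul_left C
  have htotal := (hjoint.hasSum.prod_fiberwise hstep).unique (hv.hasSum.mul_left C)
  have hswap : HasSum (fun p : A × B => u p.1 * K p.1 p.2) (C * ∑' b, v b) :=
    (Equiv.prodComm B A).hasSum_iff.1 (htotal ▸ hjoint.hasSum)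
  exact hswap.prod_fiberwise fun a => by simpa only [mul_one] using (hrow a).mul_left (u a)

theorem hasSum_div_tsum_mul_of_stochastic (hu : ∀ a, 0 ≤ u a) (hK : ∀ a b, 0 ≤ K a b)
    (hrow : ∀ a, HasSum (fun b => K a b) 1) (hstep : ∀ b, HasSum (fun a => u a * K a b) (C * v b))
    (hv : Summable v) (hu0 : ∑' a, u a ≠ 0) (b : B) :
    HasSum (fun a => u a / (∑' a, u a) * K a b) (v b / ∑' b, v b) := by
  have htotal := (hasSum_of_stochastic hu hK hrow hstep hv).tsum_eq
  have hC : C ≠ 0 := left_ne_zero_of_mul (htotal ▸ hu0)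
  rw [← mul_div_mul_left (v b) _ hC, ← htotal]
  simpa only [div_mul_eq_mul_div] using (hstep b).div_const (∑' a, u a)

end Kernel

section Coherency

variable {q zm zp : ℝ} {al be ga de : ℂ}

theorem re_wN_eq (hq0 : 0 < q) (hq1 : q < 1) (h₁ : PositivePair q zm zp al be)
    (h₂ : PositivePair q zm zp ga de) (N : ℕ) (x : ℝ) :
    (wN q al be ga de N x).re =
      |x| * weightRatio q (al + be).re (al * be).re (ga + de).re (ga * de).re N x := by
  have hq : (q : ℂ) ≠ 0 := mod_cast hq0.ne'
  have harg (c : ℂ) : c * (q : ℂ) ^ (1 - (N : ℤ)) * x = c * ↑(x * q / q ^ N) := by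
    push_cast
    rw [zpow_sub₀ hq, zpow_one, zpow_natCast]
    ring
  rw [wN, weightC, harg, harg, qpochInf_mul_qpochInf hq0.le hq1 h₁.add_im h₁.mul_im,
    qpochInf_mul_qpochInf hq0.le hq1 h₂.add_im h₂.mul_im, weightRatio, ← mul_div_assoc]
  norm_cast

theorem zwUnnorm_eq (hq0 : 0 < q) (hq1 : q < 1) (h₁ : PositivePair q zm zp al be)
    (h₂ : PositivePair q zm zp ga de) {N : ℕ} (X : Conf q zm zp N) :
    zwUnnorm q zm zp al be ga de N X =
      (∏ i, |X.1 i| * weightRatio q (al + be).re (al * be).re (ga + de).re (ga * de).re N (X.1 i)) *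
        vprod X.1 ^ 2 := by
  simp only [zwUnnorm, re_wN_eq hq0 hq1 h₁ h₂, vprod, Finset.prod_pow]

theorem zwUnnorm_pos (hq0 : 0 < q) (hq1 : q < 1) (hzm : zm < 0) (hzp : 0 < zp)
    (h₁ : PositivePair q zm zp al be) (h₂ : PositivePair q zm zp ga de) {N : ℕ}
    (X : Conf q zm zp N) : 0 < zwUnnorm q zm zp al be ga de N X := by
  rw [zwUnnorm_eq hq0 hq1 h₁ h₂]
  refine mul_pos (Finset.prod_pos fun i _ => ?_) (pow_pos (vprod_pos X.2.1) 2)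
  exact mul_pos (abs_pos.2 (ne_zero_of_mem_Lambda hq0 hzm hzp (X.2.2 i)))
    (weightRatio_pos hq0 hq1 h₁.quadFactor_pos h₂.quadFactor_pos N (X.2.2 i))

theorem exists_hasSum_zwUnnorm_mul_qlink (hq0 : 0 < q) (hq1 : q < 1) (hzm : zm < 0) (hzp : 0 < zp)
    (h₁ : PositivePair q zm zp al be) (h₂ : PositivePair q zm zp ga de)
    (hp : (al * be).re < (ga * de).re * q) (N : ℕ) :
    ∃ C : ℝ, ∀ Y : Conf q zm zp N,
      HasSum (fun X => zwUnnorm q zm zp al be ga de (N + 1) X * qlink q zm zp N X Y)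
        (C * zwUnnorm q zm zp al be ga de N Y) := by
  obtain ⟨C, hC⟩ := exists_hasSum_indicator_interlaces hq0 hq1 hzm hzp h₁.quadFactor_pos
    h₂.quadFactor_pos hp N
  refine ⟨qpochR q q N * C, fun Y => ?_⟩
  have h := (hC Y).mul_left ((∏ i, |Y.1 i|) * qpochR q q N * vprod Y.1)
  convert! h using 1
  · funext X
    have hX := (vprod_pos X.2.1).ne'
    rw [zwUnnorm_eq hq0 hq1 h₁ h₂, qlink]
    by_cases hXY : Interlaces q zm zp Y X
    · rw [if_pos hXY, indicator_of_mem (mem_ofPred_eq ▸ hXY)]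
      field_simp
    · rw [if_neg hXY, indicator_of_notMem hXY, mul_zero, mul_zero]
  · rw [zwUnnorm_eq hq0 hq1 h₁ h₂, Finset.prod_mul_distrib]
    ring

theorem summable_zwUnnorm (hq0 : 0 < q) (hq1 : q < 1) (hzm : zm < 0) (hzp : 0 < zp)
    (h₁ : PositivePair q zm zp al be) (h₂ : PositivePair q zm zp ga de)
    (hp : (al * be).re < (ga * de).re * q) (N : ℕ) :
    Summable fun X : Conf q zm zp N => zwUnnorm q zm zp al be ga de N X := by
  induction N with
  | zero =>
    have : Subsingleton (Conf q zm zp 0) := inferInstanceAs (Subsingleton (Subtype _))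
    have : Finite (Conf q zm zp 0) := .of_subsingleton
    exact .of_finite
  | succ N ih =>
    obtain ⟨C, hC⟩ := exists_hasSum_zwUnnorm_mul_qlink hq0 hq1 hzm hzp h₁ h₂ hp N
    exact (hasSum_of_stochastic (fun X => (zwUnnorm_pos hq0 hq1 hzm hzp h₁ h₂ X).le)
      (qlink_nonneg hq0.le hq1) (hasSum_qlink hq0 hq1 hzm hzp) hC ih).summable

theorem nonempty_Conf (hq0 : 0 < q) (hq1 : q < 1) (hzp : 0 < zp) (N : ℕ) :
    Nonempty (Conf q zm zp N) := by
  refine ⟨⟨fun i => zp / q ^ i.1, fun i j hij => ?_, fun i => ?_⟩⟩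
  · exact div_lt_div_of_pos_left hzp (pow_pos hq0 _) (pow_lt_pow_right_of_lt_one₀ hq0 hq1 hij)
  · exact div_pow_mem_Lambda hq0 (.inr ⟨0, by simp⟩) i

theorem ZN_pos (hq0 : 0 < q) (hq1 : q < 1) (hzm : zm < 0) (hzp : 0 < zp)
    (h₁ : PositivePair q zm zp al be) (h₂ : PositivePair q zm zp ga de)
    (hp : (al * be).re < (ga * de).re * q) (N : ℕ) : 0 < ZN q zm zp al be ga de N := by
  obtain ⟨X⟩ := nonempty_Conf (zm := zm) hq0 hq1 hzp N
  exact (summable_zwUnnorm hq0 hq1 hzm hzp h₁ h₂ hp N).tsum_pos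
    (fun X => (zwUnnorm_pos hq0 hq1 hzm hzp h₁ h₂ X).le) X
    (zwUnnorm_pos hq0 hq1 hzm hzp h₁ h₂ X)

end Coherency

/-- Theorem 4.7 (coherency): for an admissible nondegenerate quadruple, the q-zw-measures
form a coherent system: Σ_{X ∈ 𝔾_{N+1}} M_{N+1}(X) Λ^{N+1}_N(X,Y) = M_N(Y). -/
theorem zw_coherency (q zm zp : ℝ) (hq0 : 0 < q) (hq1 : q < 1) (hzm : zm < 0)
    (hzp : 0 < zp) (al be ga de : ℂ) (hadm : AdmissibleNondeg q zm zp al be ga de)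
    (N : ℕ) (hN : 1 ≤ N) (Y : Conf q zm zp N) :
    HasSum
      (fun X : Conf q zm zp (N+1) =>
        zwM q zm zp al be ga de (N+1) X * qlink q zm zp N X Y)
      (zwM q zm zp al be ga de N Y) := by
  obtain ⟨hab, hgd, hp⟩ := hadm
  have h₁ := hab.positivePair hq0 hq1 hzm hzp
  have h₂ := hgd.positivePair hq0 hq1 hzm hzp
  obtain ⟨C, hC⟩ := exists_hasSum_zwUnnorm_mul_qlink hq0 hq1 hzm hzp h₁ h₂ hp N
  exact hasSum_div_tsum_mul_of_stochastic
    (fun X => (zwUnnorm_pos hq0 hq1 hzm hzp h₁ h₂ X).le) (qlink_nonneg hq0.le hq1)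
    (hasSum_qlink hq0 hq1 hzm hzp) hC (summable_zwUnnorm hq0 hq1 hzm hzp h₁ h₂ hp N)
    (ZN_pos hq0 hq1 hzm hzp h₁ h₂ hp (N + 1)).ne' Y

end
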